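/- Let p ≥ 6, u = 2^(1−p), and let o_x, o_y ∈ [1, 1/(8u) − 2]. Let x_h, x_l, y_h, y_l ∈ F_p satisfy |x_l| ≤ o_x·u·|x_h| and |y_l| ≤ o_y·u·|y_h|. In any execution of sloppy double-word addition in faithful rounding, if |w| > |s_h| then the concluding Fast2Sum (normalization) step is error-free: z_h + z_l = s_h + w exactly. -/

import Mathlib

/-!
Floating-point numbers are the points `x` of some grid `2 ^ e * ℤ` with `|x| < 2 ^ (p + e)`, and on
`2 ^ (p + e - 1) ≤ |x| < 2 ^ (p + e)` faithful rounding moves `x` to a neighbouring point of that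
grid.

If `max |xh| |yh| ≤ 2 * |xh + yh|`, the relative errors, at most `1 / 32` each, and the smallness of
`xl + yl` give `|w| ≤ |sh|`. So `|sh| < |w|` forces cancellation: `|xh + yh|` is at most
`m = min |xh| |yh|`. Take a grid `2 ^ g * ℤ` containing `xh` and `yh` with `m < 2 ^ (p + g)`. Then
`xh + yh` is representable, the 2Sum is error-free, `sh` lies on this grid, and `w`, essentially
`xl + yl`, is at most `m` in absolute value.

Hence `sh` and `w` lie on a common grid `2 ^ k * ℤ` on which both are below `2 ^ (p + k)`. The error
of `sh + w` is then at most one unit `2 ^ k`, so both remaining operations of Fast2Sum are exact.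
-/

/-- The radix-2, precision-`p` floating-point numbers with unlimited exponent range. -/
def Fp (p : ℕ) : Set ℝ := {x : ℝ | ∃ M e : ℤ, |M| ≤ 2 ^ p - 1 ∧ x = (M : ℝ) * (2 : ℝ) ^ e}

/-- Round toward `-∞`: the largest floating-point number `≤ x`. -/
noncomputable def RD (p : ℕ) (x : ℝ) : ℝ := sSup {f : ℝ | f ∈ Fp p ∧ f ≤ x}

/-- Round toward `+∞`: the smallest floating-point number `≥ x`. -/
noncomputable def RU (p : ℕ) (x : ℝ) : ℝ := sInf {f : ℝ | f ∈ Fp p ∧ x ≤ f}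

/-- `y` is a faithful rounding of `x`. -/
def Faithful (p : ℕ) (x y : ℝ) : Prop := y = RD p x ∨ y = RU p x

/-- All hypotheses of one execution of the sloppy double-word addition algorithm
(`2Sum(x_h,y_h)`, `v = ∘(x_l+y_l)`, `w = ∘(s_l+v)`, `Fast2Sum(s_h,w)`) in faithful
rounding, each rounding chosen independently. -/
def SloppyFaithful (p : ℕ) (xh xl yh yl sh a' b' da db sl v w zh d zl : ℝ) : Prop :=
  Faithful p (xh + yh) sh ∧ Faithful p (sh - yh) a' ∧ Faithful p (sh - a') b' ∧
  Faithful p (xh - a') da ∧ Faithful p (yh - b') db ∧ Faithful p (da + db) sl ∧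
  Faithful p (xl + yl) v ∧ Faithful p (sl + v) w ∧
  Faithful p (sh + w) zh ∧ Faithful p (zh - sh) d ∧ Faithful p (w - d) zl

/-! ### Dyadic grids -/

/-- The grid `2 ^ e * ℤ`: the floating-point numbers whose unit in the last place is `2 ^ e` belong
to it. As an additive subgroup it makes sums and differences of grid points automatic. -/
noncomputable def dyadicGrid (e : ℤ) : AddSubgroup ℝ := AddSubgroup.zmultiples ((2 : ℝ) ^ e)

section DyadicGrid

variable {e k : ℤ} {x y : ℝ}

lemma mem_dyadicGrid_iff : x ∈ dyadicGrid e ↔ ∃ M : ℤ, x = M * (2 : ℝ) ^ e := by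
  simp only [dyadicGrid, AddSubgroup.mem_zmultiples_iff, zsmul_eq_mul, eq_comm]

lemma zpow_mem_dyadicGrid (h : k ≤ e) : (2 : ℝ) ^ e ∈ dyadicGrid k := by
  obtain ⟨n, rfl⟩ := Int.le.dest h
  exact mem_dyadicGrid_iff.2
    ⟨2 ^ n, by rw [zpow_add₀ two_ne_zero, zpow_natCast]; push_cast; ring⟩

lemma dyadicGrid_antitone : Antitone dyadicGrid := fun _ _ h =>
  AddSubgroup.zmultiples_le_of_mem (zpow_mem_dyadicGrid h)

lemma add_zpow_le_of_lt_of_mem_dyadicGrid (hx : x ∈ dyadicGrid e) (hy : y ∈ dyadicGrid e)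
    (h : x < y) : x + 2 ^ e ≤ y := by
  obtain ⟨M, rfl⟩ := mem_dyadicGrid_iff.1 hx
  obtain ⟨N, rfl⟩ := mem_dyadicGrid_iff.1 hy
  have hMN : M + 1 ≤ N := by exact_mod_cast lt_of_mul_lt_mul_right h (by positivity)
  calc (M : ℝ) * 2 ^ e + 2 ^ e = ((M + 1 : ℤ) : ℝ) * 2 ^ e := by push_cast; ring
    _ ≤ N * 2 ^ e := by gcongr

/-- Rounding down to the grid `2 ^ e * ℤ`. It agrees with `RD p` where `2 ^ e` is the unit in the
last place. -/
noncomputable def gridFloor (e : ℤ) (x : ℝ) : ℝ := ⌊x / 2 ^ e⌋ * 2 ^ e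

lemma gridFloor_mem_dyadicGrid (e : ℤ) (x : ℝ) : gridFloor e x ∈ dyadicGrid e :=
  mem_dyadicGrid_iff.2 ⟨_, rfl⟩

lemma gridFloor_le (e : ℤ) (x : ℝ) : gridFloor e x ≤ x :=
  (le_div_iff₀ (by positivity)).1 (Int.floor_le _)

lemma lt_gridFloor_add_zpow (e : ℤ) (x : ℝ) : x < gridFloor e x + 2 ^ e := by
  have h := (div_lt_iff₀ (by positivity)).1 (Int.lt_floor_add_one (x / 2 ^ e))
  rwa [add_one_mul] at h

lemma le_gridFloor (hy : y ∈ dyadicGrid e) (h : y ≤ x) : y ≤ gridFloor e x := by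
  by_contra! hlt
  linarith [add_zpow_le_of_lt_of_mem_dyadicGrid (gridFloor_mem_dyadicGrid e x) hy hlt,
    lt_gridFloor_add_zpow e x]

end DyadicGrid

/-! ### Floating-point numbers -/

section FloatingPoint

variable {p : ℕ} {e : ℤ} {x y : ℝ}

lemma mem_Fp_iff : x ∈ Fp p ↔ ∃ e, x ∈ dyadicGrid e ∧ |x| < 2 ^ (p + e) := by
  have abs_lt_iff (M e : ℤ) : |M| ≤ 2 ^ p - 1 ↔ |(M : ℝ) * 2 ^ e| < 2 ^ (p + e) := by
    rw [abs_mul, abs_of_pos (by positivity : (0 : ℝ) < 2 ^ e), zpow_add₀ two_ne_zero, zpow_natCast,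
      mul_lt_mul_iff_left₀ (by positivity), Int.le_sub_one_iff]
    norm_cast
  constructor
  · rintro ⟨M, e, hM, rfl⟩
    exact ⟨e, mem_dyadicGrid_iff.2 ⟨M, rfl⟩, (abs_lt_iff M e).1 hM⟩
  · rintro ⟨e, hx, hlt⟩
    obtain ⟨M, rfl⟩ := mem_dyadicGrid_iff.1 hx
    exact ⟨M, e, (abs_lt_iff M e).2 hlt, rfl⟩

lemma zero_mem_Fp (p : ℕ) : (0 : ℝ) ∈ Fp p :=
  mem_Fp_iff.2 ⟨0, zero_mem _, by rw [abs_zero]; positivity⟩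

lemma neg_mem_Fp_iff : -x ∈ Fp p ↔ x ∈ Fp p := by
  simp only [mem_Fp_iff, neg_mem_iff, abs_neg]

lemma mem_Fp_of_mem_dyadicGrid (hp : 1 ≤ p) (hx : x ∈ dyadicGrid e) (h : |x| ≤ 2 ^ (p + e)) :
    x ∈ Fp p := by
  rcases h.lt_or_eq with hlt | heq
  · exact mem_Fp_iff.2 ⟨e, hx, hlt⟩
  · -- The significand `2 ^ p` does not fit, but a power of two lies on a coarser grid.
    refine mem_Fp_iff.2 ⟨p + e, abs_mem_iff.1 ?_, ?_⟩
    · exact heq ▸ zpow_mem_dyadicGrid le_rfl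
    · exact heq ▸ zpow_lt_zpow_right₀ one_lt_two (by omega)

lemma mem_dyadicGrid_of_mem_Fp (hx : x ∈ Fp p) (hlo : 2 ^ (p + e - 1) ≤ |x|) :
    x ∈ dyadicGrid e := by
  obtain ⟨j, hj, hlt⟩ := mem_Fp_iff.1 hx
  have : (p + e - 1 : ℤ) < p + j := (zpow_lt_zpow_iff_right₀ one_lt_two).1 (hlo.trans_lt hlt)
  exact dyadicGrid_antitone (by omega : e ≤ j) hj

lemma exists_common_dyadicGrid (hx : x ∈ Fp p) (hy : y ∈ Fp p) :
    ∃ g, x ∈ dyadicGrid g ∧ y ∈ dyadicGrid g ∧ min |x| |y| < 2 ^ (p + g) := by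
  obtain ⟨e, hxe, hxlt⟩ := mem_Fp_iff.1 hx
  obtain ⟨f, hyf, hylt⟩ := mem_Fp_iff.1 hy
  rcases le_total e f with h | h
  · exact ⟨e, hxe, dyadicGrid_antitone h hyf, min_lt_of_left_lt hxlt⟩
  · exact ⟨f, dyadicGrid_antitone h hxe, hyf, min_lt_of_right_lt hylt⟩

lemma exists_zpow_le_abs_lt_zpow (p : ℕ) (hx : x ≠ 0) :
    ∃ e : ℤ, 2 ^ (p + e - 1) ≤ |x| ∧ |x| < 2 ^ (p + e) := by
  obtain ⟨n, hlo, hhi⟩ := exists_mem_Ico_zpow (abs_pos.2 hx) (one_lt_two (α := ℝ))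
  refine ⟨n + 1 - p, ?_, ?_⟩
  · rwa [show (p + (n + 1 - p) - 1 : ℤ) = n by ring]
  · rwa [show (p + (n + 1 - p) : ℤ) = n + 1 by ring]

end FloatingPoint

/-! ### Faithful rounding -/

section Rounding

variable {p : ℕ} {e : ℤ} {x y : ℝ}

lemma isGreatest_gridFloor (hp : 1 ≤ p) (hlo : 2 ^ (p + e - 1) ≤ |x|) (hhi : |x| < 2 ^ (p + e)) :
    IsGreatest {f | f ∈ Fp p ∧ f ≤ x} (gridFloor e x) := by
  obtain ⟨hneg, hpos⟩ := abs_lt.1 hhi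
  have hle : gridFloor e x ≤ 2 ^ (p + e) := (gridFloor_le e x).trans hpos.le
  have hge : -2 ^ (p + e) ≤ gridFloor e x :=
    le_gridFloor (neg_mem (zpow_mem_dyadicGrid (by omega))) hneg.le
  refine ⟨⟨mem_Fp_of_mem_dyadicGrid hp (gridFloor_mem_dyadicGrid e x) (abs_le.2 ⟨hge, hle⟩),
    gridFloor_le e x⟩, ?_⟩
  rintro f ⟨hf, hfx⟩
  rcases le_or_gt (2 ^ (p + e - 1)) |f| with hf_lo | hf_hi
  · exact le_gridFloor (mem_dyadicGrid_of_mem_Fp hf hf_lo) hfx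
  · obtain ⟨hf_neg, hf_pos⟩ := abs_lt.1 hf_hi
    -- Only `x > 0` leaves room below `x` for a number of smaller magnitude.
    have hx : 2 ^ (p + e - 1) ≤ x := (le_abs.1 hlo).resolve_right (by linarith)
    exact hf_pos.le.trans (le_gridFloor (zpow_mem_dyadicGrid (by omega)) hx)

lemma RD_eq_gridFloor (hp : 1 ≤ p) (hlo : 2 ^ (p + e - 1) ≤ |x|) (hhi : |x| < 2 ^ (p + e)) :
    RD p x = gridFloor e x :=
  (isGreatest_gridFloor hp hlo hhi).csSup_eq

lemma RD_eq_self (hx : x ∈ Fp p) : RD p x = x :=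
  IsGreatest.csSup_eq ⟨⟨hx, le_rfl⟩, fun _ hf => hf.2⟩

lemma RD_mem_Fp (hp : 1 ≤ p) (x : ℝ) : RD p x ∈ Fp p := by
  rcases eq_or_ne x 0 with rfl | hx
  · rw [RD_eq_self (zero_mem_Fp p)]
    exact zero_mem_Fp p
  · obtain ⟨e, hlo, hhi⟩ := exists_zpow_le_abs_lt_zpow p hx
    rw [RD_eq_gridFloor hp hlo hhi]
    exact (isGreatest_gridFloor hp hlo hhi).1.1

lemma RU_eq_neg_RD_neg (p : ℕ) (x : ℝ) : RU p x = -RD p (-x) := by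
  have hset : {f | f ∈ Fp p ∧ x ≤ f} = -{f | f ∈ Fp p ∧ f ≤ -x} := by
    ext f
    simp only [Set.mem_neg, Set.mem_ofPred_eq, neg_mem_Fp_iff, neg_le_neg_iff]
  rw [RU, RD, hset, Real.sInf_neg]

lemma faithful_iff : Faithful p x y ↔ y = RD p x ∨ -y = RD p (-x) := by
  rw [Faithful, RU_eq_neg_RD_neg, neg_eq_iff_eq_neg]

namespace Faithful

lemma eq_of_mem (h : Faithful p x y) (hx : x ∈ Fp p) : y = x := by
  rcases faithful_iff.1 h with h | h
  · rw [h, RD_eq_self hx]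
  · rwa [RD_eq_self (neg_mem_Fp_iff.2 hx), neg_inj] at h

lemma mem_Fp (h : Faithful p x y) (hp : 1 ≤ p) : y ∈ Fp p := by
  rcases faithful_iff.1 h with h | h
  · exact h ▸ RD_mem_Fp hp x
  · exact neg_mem_Fp_iff.1 (h ▸ RD_mem_Fp hp (-x))

lemma eq_gridFloor_or (h : Faithful p x y) (hp : 1 ≤ p) (hlo : 2 ^ (p + e - 1) ≤ |x|)
    (hhi : |x| < 2 ^ (p + e)) : y = gridFloor e x ∨ -y = gridFloor e (-x) := by
  rw [← RD_eq_gridFloor hp hlo hhi, ← RD_eq_gridFloor hp (abs_neg x ▸ hlo) (abs_neg x ▸ hhi)]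
  exact faithful_iff.1 h

lemma mem_dyadicGrid (h : Faithful p x y) (hp : 1 ≤ p) (hlo : 2 ^ (p + e - 1) ≤ |x|)
    (hhi : |x| < 2 ^ (p + e)) : y ∈ dyadicGrid e := by
  rcases h.eq_gridFloor_or hp hlo hhi with h | h
  · exact h ▸ gridFloor_mem_dyadicGrid e x
  · exact neg_mem_iff.1 (h ▸ gridFloor_mem_dyadicGrid e (-x))

lemma abs_sub_lt_zpow (h : Faithful p x y) (hp : 1 ≤ p) (hlo : 2 ^ (p + e - 1) ≤ |x|)
    (hhi : |x| < 2 ^ (p + e)) : |y - x| < 2 ^ e := by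
  have hpos : (0 : ℝ) < 2 ^ e := by positivity
  rw [abs_lt]
  rcases h.eq_gridFloor_or hp hlo hhi with h | h
  · constructor <;> linarith [gridFloor_le e x, lt_gridFloor_add_zpow e x]
  · constructor <;> linarith [gridFloor_le e (-x), lt_gridFloor_add_zpow e (-x)]

lemma mem_dyadicGrid_and_abs_sub_le (h : Faithful p x y) (hp : 1 ≤ p) (hx : x ∈ dyadicGrid e)
    (hlt : |x| < 2 ^ (p + e + 1)) : y ∈ dyadicGrid e ∧ |y - x| ≤ 2 ^ e := by
  rcases le_or_gt |x| (2 ^ (p + e)) with hle | hgt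
  · rw [h.eq_of_mem (mem_Fp_of_mem_dyadicGrid hp hx hle), sub_self, abs_zero]
    exact ⟨hx, by positivity⟩
  · -- `x` lies in the next binade, whose unit `2 ^ (e + 1)` strictly bounds the error.
    have hlo : (2 : ℝ) ^ (p + (e + 1) - 1) ≤ |x| := by
      rw [show (p + (e + 1) - 1 : ℤ) = p + e by ring]
      exact hgt.le
    rw [add_assoc] at hlt
    have he : e ≤ e + 1 := by omega
    have hy : y ∈ dyadicGrid e := dyadicGrid_antitone he (h.mem_dyadicGrid hp hlo hlt)
    have hgap : |y - x| + 2 ^ e ≤ 2 ^ (e + 1) :=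
      add_zpow_le_of_lt_of_mem_dyadicGrid (abs_mem_iff.2 (sub_mem hy hx))
        (zpow_mem_dyadicGrid he) (h.abs_sub_lt_zpow hp hlo hlt)
    rw [zpow_add_one₀ two_ne_zero] at hgap
    exact ⟨hy, by linarith⟩

lemma abs_sub_le (h : Faithful p x y) (hp : 1 ≤ p) : |y - x| ≤ 2 ^ (1 - p : ℤ) * |x| := by
  rcases eq_or_ne x 0 with rfl | hx
  · simp [h.eq_of_mem (zero_mem_Fp p)]
  · obtain ⟨e, hlo, hhi⟩ := exists_zpow_le_abs_lt_zpow p hx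
    calc |y - x| ≤ 2 ^ e := (h.abs_sub_lt_zpow hp hlo hhi).le
      _ = 2 ^ (1 - p : ℤ) * 2 ^ (p + e - 1) := by rw [← zpow_add₀ two_ne_zero]; ring_nf
      _ ≤ 2 ^ (1 - p : ℤ) * |x| := by gcongr

lemma abs_sub_le_div (h : Faithful p x y) (hp : 6 ≤ p) : |y - x| ≤ |x| / 32 := by
  have hu : (2 : ℝ) ^ (1 - p : ℤ) ≤ 1 / 32 := by
    calc (2 : ℝ) ^ (1 - p : ℤ) ≤ 2 ^ (-5 : ℤ) := zpow_le_zpow_right₀ one_le_two (by omega)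
      _ = 1 / 32 := by norm_num
  calc |y - x| ≤ 2 ^ (1 - p : ℤ) * |x| := h.abs_sub_le (by omega)
    _ ≤ 1 / 32 * |x| := by gcongr
    _ = |x| / 32 := by ring

lemma abs_le_mul_abs (h : Faithful p x y) (hp : 6 ≤ p) : |y| ≤ 33 / 32 * |x| := by
  linarith [h.abs_sub_le_div hp, abs_sub_abs_le_abs_sub y x]

lemma mul_abs_le_abs (h : Faithful p x y) (hp : 6 ≤ p) : 31 / 32 * |x| ≤ |y| := by
  linarith [abs_sub_comm x y ▸ h.abs_sub_le_div hp, abs_sub_abs_le_abs_sub x y]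

end Faithful

end Rounding

/-! ### 2Sum and Fast2Sum -/

/-- An execution of 2Sum on `(x, y)` in faithful rounding, with sum `s` and error term `t`; the
other variables are its intermediate results, named as in `SloppyFaithful`. -/
structure IsTwoSum (p : ℕ) (x y s a' b' da db t : ℝ) : Prop where
  sum : Faithful p (x + y) s
  left : Faithful p (s - y) a'
  right : Faithful p (s - a') b'
  left_error : Faithful p (x - a') da
  right_error : Faithful p (y - b') db
  error : Faithful p (da + db) t

/-- An execution of Fast2Sum on `(a, b)` in faithful rounding, with sum `s`, intermediate result `d`
and error term `t`. -/
structure IsFastTwoSum (p : ℕ) (a b s d t : ℝ) : Prop where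
  sum : Faithful p (a + b) s
  diff : Faithful p (s - a) d
  error : Faithful p (b - d) t

section Algorithms

variable {p : ℕ} {x y s a a' b b' d da db t : ℝ} {e k : ℤ}

lemma IsTwoSum.exact (h : IsTwoSum p x y s a' b' da db t) (hx : x ∈ Fp p) (hy : y ∈ Fp p)
    (hxy : x + y ∈ Fp p) : s = x + y ∧ t = 0 := by
  obtain ⟨hs, ha, hb, hda, hdb, ht⟩ := h
  obtain rfl := hs.eq_of_mem hxy
  rw [add_sub_cancel_right] at ha
  obtain rfl := ha.eq_of_mem hx
  rw [add_sub_cancel_left] at hb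
  obtain rfl := hb.eq_of_mem hy
  rw [sub_self] at hda hdb
  obtain rfl := hda.eq_of_mem (zero_mem_Fp p)
  obtain rfl := hdb.eq_of_mem (zero_mem_Fp p)
  rw [add_zero] at ht
  exact ⟨rfl, ht.eq_of_mem (zero_mem_Fp p)⟩

lemma IsTwoSum.abs_error_le (h : IsTwoSum p x y s a' b' da db t) (hp : 6 ≤ p)
    (hmax : max |x| |y| ≤ 2 * |x + y|) : |t| ≤ |x + y| / 4 := by
  obtain ⟨hx, hy⟩ := max_le_iff.1 hmax
  have err_s := h.sum.abs_sub_le_div hp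
  have err_a := h.left.abs_sub_le_div hp
  have err_b := h.right.abs_sub_le_div hp
  -- Each argument is an exact value plus the rounding errors committed so far.
  have size_a : |s - y| ≤ |x| + |s - (x + y)| := by
    rw [show s - y = x + (s - (x + y)) by ring]
    exact abs_add_le _ _
  have size_b : |s - a'| ≤ |y| + |a' - (s - y)| := by
    rw [show s - a' = y - (a' - (s - y)) by ring]
    exact abs_sub _ _
  have size_da : |x - a'| ≤ |s - (x + y)| + |a' - (s - y)| := by
    rw [show x - a' = -((s - (x + y)) + (a' - (s - y))) by ring, abs_neg]
    exact abs_add_le _ _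
  have size_db : |y - b'| ≤ |a' - (s - y)| + |b' - (s - a')| := by
    rw [show y - b' = (a' - (s - y)) - (b' - (s - a')) by ring]
    exact abs_sub _ _
  linarith [h.left_error.abs_le_mul_abs hp, h.right_error.abs_le_mul_abs hp,
    h.error.abs_le_mul_abs hp, abs_add_le da db, abs_nonneg (x + y)]

lemma IsFastTwoSum.exact_of_mem_dyadicGrid (h : IsFastTwoSum p a b s d t) (hp : 1 ≤ p)
    (ha : a ∈ dyadicGrid k) (hb : b ∈ dyadicGrid k) (ha_le : |a| ≤ 2 ^ (p + k))
    (hb_lt : |b| < 2 ^ (p + k)) : s + t = a + b := by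
  obtain ⟨hs, hd, ht⟩ := h
  have hsum_lt : |a + b| < 2 ^ (p + k + 1) := by
    rw [zpow_add_one₀ two_ne_zero]
    linarith [abs_add_le a b]
  obtain ⟨hs_mem, herr⟩ := hs.mem_dyadicGrid_and_abs_sub_le hp (add_mem ha hb) hsum_lt
  have hd_eq : d = s - a := by
    have hb_gap : |b| + 2 ^ k ≤ 2 ^ (p + k) := add_zpow_le_of_lt_of_mem_dyadicGrid
      (abs_mem_iff.2 hb) (zpow_mem_dyadicGrid (by omega)) hb_lt
    have hle : |s - a| ≤ |b| + |s - (a + b)| := by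
      rw [show s - a = b + (s - (a + b)) by ring]
      exact abs_add_le _ _
    exact hd.eq_of_mem (mem_Fp_of_mem_dyadicGrid hp (sub_mem hs_mem ha) (by linarith))
  have ht_eq : t = b - d := by
    refine ht.eq_of_mem (mem_Fp_of_mem_dyadicGrid (e := k) hp ?_ ?_)
    · exact hd_eq ▸ sub_mem hb (sub_mem hs_mem ha)
    · calc |b - d| = |s - (a + b)| := by rw [hd_eq, ← abs_neg]; congr 1; ring
        _ ≤ 2 ^ k := herr
        _ ≤ 2 ^ (p + k) := zpow_le_zpow_right₀ one_le_two (by omega)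
  linarith

lemma IsFastTwoSum.exact_of_abs_le (h : IsFastTwoSum p a b s d t) (hp : 1 ≤ p)
    (ha : a ∈ dyadicGrid e) (hb : b ∈ Fp p) (hab : |a| ≤ |b|) (hb_lt : |b| < 2 ^ (p + e)) :
    s + t = a + b := by
  obtain ⟨k, hbk, hbk_lt⟩ := mem_Fp_iff.1 hb
  rcases le_total e k with hek | hke
  · exact h.exact_of_mem_dyadicGrid hp ha (dyadicGrid_antitone hek hbk) (hab.trans hb_lt.le) hb_lt
  · exact h.exact_of_mem_dyadicGrid hp (dyadicGrid_antitone hke ha) hbk (hab.trans hbk_lt.le) hbk_lt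

end Algorithms

/-! ### Sloppy double-word addition -/

lemma abs_add_le_min_of_lt_max {x y : ℝ} (h : 2 * |x + y| < max |x| |y|) :
    |x + y| ≤ min |x| |y| ∧ max |x| |y| ≤ 2 * min |x| |y| := by
  have hx : |x| ≤ |x + y| + |y| := by simpa using abs_sub (x + y) y
  have hy : |y| ≤ |x + y| + |x| := by simpa using abs_sub (x + y) x
  rcases le_total |x| |y| with hle | hle
  · rw [max_eq_right hle] at h ⊢
    rw [min_eq_left hle]
    constructor <;> linarith
  · rw [max_eq_left hle] at h ⊢
    rw [min_eq_right hle]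
    constructor <;> linarith

lemma abs_le_div_eight_of_overlap {u o h l : ℝ} (hu : 0 < u) (ho : o ≤ 1 / (8 * u) - 2)
    (hl : |l| ≤ o * u * |h|) : |l| ≤ |h| / 8 := by
  have hou : o * u ≤ 1 / 8 := by
    calc o * u ≤ (1 / (8 * u) - 2) * u := by gcongr
      _ = 1 / 8 - 2 * u := by field_simp
      _ ≤ 1 / 8 := by linarith
  calc |l| ≤ o * u * |h| := hl
    _ ≤ 1 / 8 * |h| := by gcongr
    _ = |h| / 8 := by ring

lemma abs_add_le_div_eight_of_overlap {u ox oy xh xl yh yl : ℝ} (hu : 0 < u)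
    (hox : ox ≤ 1 / (8 * u) - 2) (hoy : oy ≤ 1 / (8 * u) - 2) (hx : |xl| ≤ ox * u * |xh|)
    (hy : |yl| ≤ oy * u * |yh|) : |xl + yl| ≤ (|xh| + |yh|) / 8 := by
  linarith [abs_add_le xl yl, abs_le_div_eight_of_overlap hu hox hx,
    abs_le_div_eight_of_overlap hu hoy hy]

section Sloppy

variable {p : ℕ} {xh xl yh yl sh a' b' da db sl v w zh d zl : ℝ}

lemma SloppyFaithful.isTwoSum
    (h : SloppyFaithful p xh xl yh yl sh a' b' da db sl v w zh d zl) :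
    IsTwoSum p xh yh sh a' b' da db sl := by
  obtain ⟨hs, ha, hb, hda, hdb, hsl, -⟩ := h
  exact ⟨hs, ha, hb, hda, hdb, hsl⟩

lemma SloppyFaithful.isFastTwoSum
    (h : SloppyFaithful p xh xl yh yl sh a' b' da db sl v w zh d zl) :
    IsFastTwoSum p sh w zh d zl := by
  obtain ⟨-, -, -, -, -, -, -, -, hz, hd, hzl⟩ := h
  exact ⟨hz, hd, hzl⟩

lemma SloppyFaithful.w_mem_Fp (h : SloppyFaithful p xh xl yh yl sh a' b' da db sl v w zh d zl)
    (hp : 1 ≤ p) : w ∈ Fp p := by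
  obtain ⟨-, -, -, -, -, -, -, hw, -⟩ := h
  exact hw.mem_Fp hp

lemma SloppyFaithful.abs_w_le (h : SloppyFaithful p xh xl yh yl sh a' b' da db sl v w zh d zl)
    (hp : 6 ≤ p) : |w| ≤ 9 / 8 * (|sl| + |xl + yl|) := by
  obtain ⟨-, -, -, -, -, -, hv, hw, -⟩ := h
  -- The factor comes from `(33 / 32) ^ 2 ≤ 9 / 8`.
  linarith [hv.abs_le_mul_abs hp, hw.abs_le_mul_abs hp, abs_add_le sl v, abs_nonneg sl,
    abs_nonneg (xl + yl)]

lemma SloppyFaithful.abs_w_le_abs_sh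
    (h : SloppyFaithful p xh xl yh yl sh a' b' da db sl v w zh d zl) (hp : 6 ≤ p)
    (hlow : |xl + yl| ≤ (|xh| + |yh|) / 8) (hmax : max |xh| |yh| ≤ 2 * |xh + yh|) :
    |w| ≤ |sh| := by
  obtain ⟨hx, hy⟩ := max_le_iff.1 hmax
  have hsl : |sl| ≤ |xh + yh| / 4 := h.isTwoSum.abs_error_le hp hmax
  have hsh : 31 / 32 * |xh + yh| ≤ |sh| := h.isTwoSum.sum.mul_abs_le_abs hp
  linarith [h.abs_w_le hp, abs_nonneg (xh + yh)]

theorem sloppy_normalization_exact_of_w_gt_sh_general (hp : 6 ≤ p) (hxh : xh ∈ Fp p)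
    (hyh : yh ∈ Fp p) (hlow : |xl + yl| ≤ (|xh| + |yh|) / 8)
    (hrun : SloppyFaithful p xh xl yh yl sh a' b' da db sl v w zh d zl) (hlt : |sh| < |w|) :
    zh + zl = sh + w := by
  have hcancel : 2 * |xh + yh| < max |xh| |yh| := by
    by_contra! hmax
    exact hlt.not_ge (hrun.abs_w_le_abs_sh hp hlow hmax)
  obtain ⟨hsum_le, hmax_le⟩ := abs_add_le_min_of_lt_max hcancel
  obtain ⟨g, hxg, hyg, hmin⟩ := exists_common_dyadicGrid hxh hyh
  have hsum : xh + yh ∈ dyadicGrid g := add_mem hxg hyg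
  obtain ⟨hsh, hsl⟩ := hrun.isTwoSum.exact hxh hyh (mem_Fp_iff.2 ⟨g, hsum, hsum_le.trans_lt hmin⟩)
  have hw : |w| ≤ min |xh| |yh| := by
    have h := hrun.abs_w_le hp
    rw [hsl, abs_zero, zero_add] at h
    linarith [min_add_max |xh| |yh|, abs_nonneg (xh + yh)]
  exact hrun.isFastTwoSum.exact_of_abs_le (by omega) (hsh ▸ hsum) (hrun.w_mem_Fp (by omega))
    hlt.le (hw.trans_lt hmin)

end Sloppy

theorem sloppy_normalization_exact_of_w_gt_sh
    (p : ℕ) (hp : 6 ≤ p) (u : ℝ) (hu : u = (2 : ℝ) ^ (1 - (p : ℤ)))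
    (ox oy : ℝ) (hox1 : 1 ≤ ox) (hox2 : ox ≤ 1 / (8 * u) - 2)
    (hoy1 : 1 ≤ oy) (hoy2 : oy ≤ 1 / (8 * u) - 2)
    (xh xl yh yl : ℝ)
    (hxh : xh ∈ Fp p) (hxl : xl ∈ Fp p) (hyh : yh ∈ Fp p) (hyl : yl ∈ Fp p)
    (hovx : |xl| ≤ ox * u * |xh|) (hovy : |yl| ≤ oy * u * |yh|)
    (sh a' b' da db sl v w zh d zl : ℝ)
    (hrun : SloppyFaithful p xh xl yh yl sh a' b' da db sl v w zh d zl) :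
    |sh| < |w| → zh + zl = sh + w := by
  have hlow := abs_add_le_div_eight_of_overlap (hu ▸ by positivity) hox2 hoy2 hovx hovy
  exact sloppy_normalization_exact_of_w_gt_sh_general hp hxh hyh hlow hrun
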